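/- Lemma 9: run Algorithm 2 with the Borda rule and k manipulators; let s_ℓ(c) be the total score of candidate c in F(p⃗ ∪ p⃗_M) after stage ℓ of an iteration i, and define the average scores after k−1 stages q(U^i) = (1/|U^i|) Σ_{u ∈ U^i} s_{k−1}(u) and q(D^i) = (1/|D^i|) Σ_{d ∈ D^i} s_{k−1}(d). If for every iteration i (1 ≤ i ≤ ⌈m/2⌉) q(U^i) < q(D^i), then no profile p⃗_m of k−1 manipulative Borda votes satisfies RC(F(p⃗ ∪ p⃗_m), p_o) = {p}; i.e., no manipulation by k−1 manipulators makes p the negotiation result. -/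

import Mathlib

open Finset
open scoped Classical

variable {O : Type*} [Fintype O] [DecidableEq O]

/-- A vote is a strict total order on the outcome set `O`, represented by its position
function: `p o` is the number of outcomes that `o` is preferred over, so the most
preferred outcome has position `m - 1` and the least preferred position `0`. -/
def IsVote (p : O → ℕ) : Prop :=
  Function.Injective p ∧ ∀ o : O, p o < Fintype.card O

/-- The total score of candidate `c` under the scoring vector `sc` (`sc j` is the number
of points awarded to the candidate at position `j`) for the profile `P`. -/
def score (sc : ℕ → ℤ) (P : List (O → ℕ)) (c : O) : ℤ :=
  (P.map fun q => sc (q c)).sum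

/-- The positional scoring rule used as a social welfare function: candidates are ordered
by decreasing total score, ties being broken by the fixed strict tie-breaking order `tb`
(a smaller `tb`-value means preferred by the tie-breaking order).  The output is again a
position function: the position of `c` is the number of candidates ranked below `c`. -/
def swf (sc : ℕ → ℤ) (tb : O → ℕ) (P : List (O → ℕ)) : O → ℕ := fun c =>
  (univ.filter fun c' =>
      score sc P c' < score sc P c ∨ (score sc P c' = score sc P c ∧ tb c < tb c')).card

/-- `topSet p j = A^j(p)`, the set of the `j` most preferred outcomes of `p`. -/
def topSet (p : O → ℕ) (j : ℕ) : Finset O :=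
  univ.filter fun o => Fintype.card O - j ≤ p o

/-- The least `j ≥ 1` for which `A^j(p_t) ∩ A^j(p_o)` is nonempty, i.e. the iteration at
which the Rational Compromise rule terminates. -/
noncomputable def rcIndex (pt po : O → ℕ) : ℕ :=
  sInf {j | 1 ≤ j ∧ (topSet pt j ∩ topSet po j).Nonempty}

/-- The Rational Compromise bargaining rule: `A^j(p_t) ∩ A^j(p_o)` for the least `j ≥ 1`
making this intersection nonempty. -/
noncomputable def RC (pt po : O → ℕ) : Finset O :=
  topSet pt (rcIndex pt po) ∩ topSet po (rcIndex pt po)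

/-- The `n` most preferred members of `S` according to the ranking `r`. -/
def topWithin (r : O → ℕ) (S : Finset O) (n : ℕ) : Finset O :=
  S.filter fun o => (S.filter fun o' => r o < r o').card < n

/-- The `n` least preferred members of `S` according to the ranking `r`. -/
def botWithin (r : O → ℕ) (S : Finset O) (n : ℕ) : Finset O :=
  S.filter fun o => (S.filter fun o' => r o' < r o).card < n

/-- The vote built by the algorithms from a current ranking `r` and a set `H`:
the members of `H` occupy the `|H|` highest positions in reverse order of `r`
(the `r`-least preferred member of `H` is placed highest), and the members of `O ∖ H`
occupy the remaining lowest positions in reverse order of `r` (the `r`-most preferred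
of them is placed lowest). -/
def buildVote (r : O → ℕ) (H : Finset O) : O → ℕ := fun o =>
  if o ∈ H then Fintype.card O - H.card + (H.filter fun h => r o < r h).card
  else (univ.filter fun c => c ∉ H ∧ r o < r c).card

/-- `H^i` for the constructive algorithms: the preferred outcome `p` together with the
`i - 1` most preferred outcomes of `p_t` that do not belong to `A^i(p_o)`. -/
def Hset (pt po : O → ℕ) (p : O) (i : ℕ) : Finset O :=
  insert p (topWithin pt ((univ \ topSet po i).erase p) (i - 1))

/-- `H^i` for the destructive algorithms: `p*`, the most preferred outcome of `p_t` other
than `e` that belongs to `A^i(p_o)`, together with the `i - 1` most preferred outcomes of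
`p_t` other than `e` and `p*`. -/
def HsetD (pt po : O → ℕ) (e : O) (i : ℕ) : Finset O :=
  topWithin pt ((topSet po i).erase e) 1 ∪
    topWithin pt ((univ.erase e) \ topWithin pt ((topSet po i).erase e) 1) (i - 1)

/-- The manipulator profile built by Algorithm 2 (for a fixed iteration whose set is `H`)
after the given number of stages: at each stage one more vote is appended, built from the
current social ranking `F(p⃗ ∪ p⃗_M)`. -/
def stageProfile (sc : ℕ → ℤ) (tb : O → ℕ) (P : List (O → ℕ)) (H : Finset O) :
    ℕ → List (O → ℕ)
  | 0 => []
  | n + 1 =>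
      stageProfile sc tb P H n ++
        [buildVote (swf sc tb (P ++ stageProfile sc tb P H n)) H]

/-- The vote constructed by Algorithm 2 at stage `ℓ` (1-indexed). -/
def stageVote (sc : ℕ → ℤ) (tb : O → ℕ) (P : List (O → ℕ)) (H : Finset O) (ℓ : ℕ) :
    O → ℕ :=
  buildVote (swf sc tb (P ++ stageProfile sc tb P H (ℓ - 1))) H

/-- The sets `U^i_s`:  `U^i_0` consists of the member of `H^i` with the lowest position in
`p_t`, and `U^i_{s+1}` adds every candidate ranked above some member of `U^i_s` by the
stage-`l` vote (`1 ≤ l < k`) but below some member of `U^i_s` by the stage-`(l+1)` vote. -/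
noncomputable def Uaux (sc : ℕ → ℤ) (tb : O → ℕ) (P : List (O → ℕ)) (pt : O → ℕ)
    (H : Finset O) (k : ℕ) : ℕ → Finset O
  | 0 => botWithin pt H 1
  | s + 1 =>
      Uaux sc tb P pt H k s ∪
        univ.filter fun u =>
          ∃ l, 1 ≤ l ∧ l < k ∧
            (∃ u' ∈ Uaux sc tb P pt H k s,
              stageVote sc tb P H l u' < stageVote sc tb P H l u) ∧
            (∃ u' ∈ Uaux sc tb P pt H k s,
              stageVote sc tb P H (l + 1) u < stageVote sc tb P H (l + 1) u')

/-- `U^i = ⋃ₛ U^i_s`. -/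
noncomputable def Uset (sc : ℕ → ℤ) (tb : O → ℕ) (P : List (O → ℕ)) (pt : O → ℕ)
    (H : Finset O) (k : ℕ) : Finset O :=
  univ.filter fun u => ∃ s, u ∈ Uaux sc tb P pt H k s

/-- The sets `D^i_s`: `D^i_0` consists of the member of `O ∖ H^i` with the highest position
in `p_t`, and `D^i_{s+1}` adds every candidate ranked below some member of `D^i_s` by the
stage-`l` vote (`1 ≤ l < k`) but above some member of `D^i_s` by the stage-`(l+1)` vote. -/
noncomputable def Daux (sc : ℕ → ℤ) (tb : O → ℕ) (P : List (O → ℕ)) (pt : O → ℕ)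
    (H : Finset O) (k : ℕ) : ℕ → Finset O
  | 0 => topWithin pt (univ \ H) 1
  | s + 1 =>
      Daux sc tb P pt H k s ∪
        univ.filter fun d =>
          ∃ l, 1 ≤ l ∧ l < k ∧
            (∃ d' ∈ Daux sc tb P pt H k s,
              stageVote sc tb P H l d < stageVote sc tb P H l d') ∧
            (∃ d' ∈ Daux sc tb P pt H k s,
              stageVote sc tb P H (l + 1) d' < stageVote sc tb P H (l + 1) d)

/-- `D^i = ⋃ₛ D^i_s`. -/
noncomputable def Dset (sc : ℕ → ℤ) (tb : O → ℕ) (P : List (O → ℕ)) (pt : O → ℕ)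
    (H : Finset O) (k : ℕ) : Finset O :=
  univ.filter fun d => ∃ s, d ∈ Daux sc tb P pt H k s

/-- The Borda scoring vector `(m-1, m-2, …, 1, 0)`: position `j` gets `j` points. -/
def bordaVec : ℕ → ℤ := fun j => (j : ℤ)

/-- The `x`-approval scoring vector for `m` candidates: the `x` highest positions get one
point, the rest get zero. -/
def approvalVec (m x : ℕ) : ℕ → ℤ := fun j => if m ≤ j + x then 1 else 0

/-- `sc` is a scoring vector for `m` candidates: `s_{m-1} ≥ … ≥ s_0 ≥ 0` and
`s_{m-1} > s_0`. -/
def IsScoringVector (m : ℕ) (sc : ℕ → ℤ) : Prop :=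
  (∀ j, j + 1 < m → sc j ≤ sc (j + 1)) ∧ 0 ≤ sc 0 ∧ sc 0 < sc (m - 1)

/-- Algorithm 1 (constructive single-voter manipulation) returns the vote `pa`:
the guard `pos(p, p_o) ≥ ⌈m/2⌉` holds and `pa` is the vote built at the first iteration
`i ∈ {1, …, ⌈m/2⌉}` at which the manipulation check succeeds. -/
def alg1Returns (sc : ℕ → ℤ) (tb : O → ℕ) (P : List (O → ℕ)) (po : O → ℕ) (p : O)
    (pa : O → ℕ) : Prop :=
  (Fintype.card O + 1) / 2 ≤ po p ∧
    ∃ i, 1 ≤ i ∧ i ≤ (Fintype.card O + 1) / 2 ∧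
      pa = buildVote (swf sc tb P) (Hset (swf sc tb P) po p i) ∧
      RC (swf sc tb (P ++ [pa])) po = {p} ∧
      ∀ j, 1 ≤ j → j < i →
        RC (swf sc tb (P ++ [buildVote (swf sc tb P) (Hset (swf sc tb P) po p j)])) po ≠
          {p}

/-- Algorithm 2 (constructive coalitional manipulation) run with `k` manipulators returns
the profile `PM`: the guard `pos(p, p_o) ≥ ⌈m/2⌉` holds and `PM` is the `k`-stage profile
built at the first iteration `i ∈ {1, …, ⌈m/2⌉}` at which the manipulation check succeeds. -/
def alg2Returns (sc : ℕ → ℤ) (tb : O → ℕ) (P : List (O → ℕ)) (po : O → ℕ) (p : O)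
    (k : ℕ) (PM : List (O → ℕ)) : Prop :=
  (Fintype.card O + 1) / 2 ≤ po p ∧
    ∃ i, 1 ≤ i ∧ i ≤ (Fintype.card O + 1) / 2 ∧
      PM = stageProfile sc tb P (Hset (swf sc tb P) po p i) k ∧
      RC (swf sc tb (P ++ PM)) po = {p} ∧
      ∀ j, 1 ≤ j → j < i →
        RC (swf sc tb (P ++ stageProfile sc tb P (Hset (swf sc tb P) po p j) k)) po ≠ {p}

/-- The modified Algorithm 1 (destructive single-voter manipulation) returns the vote
`pa`: the guard `pos(e, p_o) < ⌊m/2⌋` fails and `pa` is the vote built at the first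
iteration `i ∈ {1, …, ⌈m/2⌉}` at which `e` is excluded from the Rational Compromise. -/
def alg1ReturnsD (sc : ℕ → ℤ) (tb : O → ℕ) (P : List (O → ℕ)) (po : O → ℕ) (e : O)
    (pa : O → ℕ) : Prop :=
  Fintype.card O / 2 ≤ po e ∧
    ∃ i, 1 ≤ i ∧ i ≤ (Fintype.card O + 1) / 2 ∧
      pa = buildVote (swf sc tb P) (HsetD (swf sc tb P) po e i) ∧
      e ∉ RC (swf sc tb (P ++ [pa])) po ∧
      ∀ j, 1 ≤ j → j < i →
        e ∈ RC (swf sc tb (P ++ [buildVote (swf sc tb P) (HsetD (swf sc tb P) po e j)])) po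

/-- The modified Algorithm 2 (destructive coalitional manipulation) run with `k`
manipulators returns the profile `PM`: the guard `pos(e, p_o) < ⌊m/2⌋` fails and `PM` is
the `k`-stage profile built at the first iteration `i ∈ {1, …, ⌈m/2⌉}` at which `e` is
excluded from the Rational Compromise. -/
def alg2ReturnsD (sc : ℕ → ℤ) (tb : O → ℕ) (P : List (O → ℕ)) (po : O → ℕ) (e : O)
    (k : ℕ) (PM : List (O → ℕ)) : Prop :=
  Fintype.card O / 2 ≤ po e ∧
    ∃ i, 1 ≤ i ∧ i ≤ (Fintype.card O + 1) / 2 ∧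
      PM = stageProfile sc tb P (HsetD (swf sc tb P) po e i) k ∧
      e ∉ RC (swf sc tb (P ++ PM)) po ∧
      ∀ j, 1 ≤ j → j < i →
        e ∈ RC (swf sc tb (P ++ stageProfile sc tb P (HsetD (swf sc tb P) po e j) k)) po

/-- The set `U^i` arising from running the `k` stages of Algorithm 2 at iteration `i`. -/
noncomputable def UsetAlg (sc : ℕ → ℤ) (tb : O → ℕ) (P : List (O → ℕ)) (po : O → ℕ)
    (p : O) (i k : ℕ) : Finset O :=
  Uset sc tb P (swf sc tb P) (Hset (swf sc tb P) po p i) k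

/-- The set `D^i` arising from running the `k` stages of Algorithm 2 at iteration `i`. -/
noncomputable def DsetAlg (sc : ℕ → ℤ) (tb : O → ℕ) (P : List (O → ℕ)) (po : O → ℕ)
    (p : O) (i k : ℕ) : Finset O :=
  Dset sc tb P (swf sc tb P) (Hset (swf sc tb P) po p i) k

/-- The vote constructed at stage `ℓ` of iteration `i` of Algorithm 2. -/
def stageVoteAlg (sc : ℕ → ℤ) (tb : O → ℕ) (P : List (O → ℕ)) (po : O → ℕ)
    (p : O) (i ℓ : ℕ) : O → ℕ :=
  stageVote sc tb P (Hset (swf sc tb P) po p i) ℓ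

/-- `s_ℓ(c)`: the total score of candidate `c` in `F(p⃗ ∪ p⃗_M)` after stage `ℓ` of
iteration `i` of Algorithm 2. -/
def stageScoreAlg (sc : ℕ → ℤ) (tb : O → ℕ) (P : List (O → ℕ)) (po : O → ℕ)
    (p : O) (i ℓ : ℕ) (c : O) : ℤ :=
  score sc (P ++ stageProfile sc tb P (Hset (swf sc tb P) po p i) ℓ) c

/-- `F(p⃗ ∪ p⃗_M)` after stage `ℓ` of iteration `i` of Algorithm 2. -/
def stageSwfAlg (sc : ℕ → ℤ) (tb : O → ℕ) (P : List (O → ℕ)) (po : O → ℕ)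
    (p : O) (i ℓ : ℕ) : O → ℕ :=
  swf sc tb (P ++ stageProfile sc tb P (Hset (swf sc tb P) po p i) ℓ)

set_option linter.unusedSectionVars false

section ReverseDynamics

variable {α : Type*}

/-- `b` arises from `a` by adding to each member of `S` the number of members of `S` with a
larger `a`-value, up to a common constant: the effect on the scores of one Borda vote
that lists `S` in reverse order of the scores `a`. -/
def ReverseStep (S : Finset α) (C : ℚ) (a b : α → ℚ) : Prop :=
  ∀ x ∈ S, b x = a x + (S.filter fun y => a x < a y).card + C

theorem card_filter_lt_add_card_filter_gt (S : Finset α) {a : α → ℚ}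
    (ha : Function.Injective a) {x : α} (hx : x ∈ S) :
    (S.filter fun y => a x < a y).card + (S.filter fun y => a y < a x).card + 1 = S.card := by
  classical
  have h₁ := Finset.card_filter_add_card_filter_not (s := S) (fun y => a x < a y)
  have h₂ : (S.filter fun y => ¬ a x < a y) = insert x (S.filter fun y => a y < a x) := by
    ext y
    simp only [Finset.mem_filter, Finset.mem_insert, not_lt]
    constructor
    · rintro ⟨hy, hle⟩
      rcases hle.lt_or_eq with hlt | heq
      · exact Or.inr ⟨hy, hlt⟩
      · exact Or.inl (ha heq)
    · rintro (rfl | ⟨hy, hlt⟩)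
      · exact ⟨hx, le_rfl⟩
      · exact ⟨hy, hlt.le⟩
  rw [h₂, Finset.card_insert_of_notMem (by simp)] at h₁
  omega

theorem ReverseStep.neg {S : Finset α} {C : ℚ} {a b : α → ℚ} (h : ReverseStep S C a b)
    (ha : Function.Injective a) :
    ReverseStep S (1 - S.card - C) (fun x => -a x) (fun x => -b x) := by
  intro x hx
  have hsplit := card_filter_lt_add_card_filter_gt S ha hx
  have hq : ((S.filter fun y => a x < a y).card : ℚ) + (S.filter fun y => a y < a x).card + 1
      = S.card := by exact_mod_cast hsplit
  simp only [neg_lt_neg_iff]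
  rw [h x hx]
  linarith

theorem sum_card_filter_lt_comm (W : Finset α) (a : α → ℚ) :
    ∑ x ∈ W, (W.filter fun y => a y < a x).card =
      ∑ x ∈ W, (W.filter fun y => a x < a y).card := by
  simp only [Finset.card_filter]
  exact Finset.sum_comm

theorem two_mul_sum_card_filter_lt (W : Finset α) {a : α → ℚ} (ha : Function.Injective a) :
    2 * ∑ x ∈ W, (W.filter fun y => a x < a y).card + W.card = W.card * W.card := by
  have h : ∀ x ∈ W, _ = W.card := fun x hx => card_filter_lt_add_card_filter_gt W ha hx
  have hsum := Finset.sum_congr rfl h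
  rw [Finset.sum_add_distrib, Finset.sum_add_distrib, sum_card_filter_lt_comm] at hsum
  simp only [Finset.sum_const, smul_eq_mul, mul_one] at hsum
  omega

/-- The points awarded to `v` and `x` differ by the number of members of `S` from `x` up to,
but excluding, `v`. -/
theorem ReverseStep.sub_eq {S : Finset α} {C : ℚ} {a b : α → ℚ} (h : ReverseStep S C a b)
    {v x : α} (hv : v ∈ S) (hx : x ∈ S) (hvx : a v < a x) :
    b v - b x = a v - a x + (S.filter fun y => a v < a y ∧ a y ≤ a x).card := by
  have hcard : (S.filter fun y => a v < a y).card =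
      (S.filter fun y => a x < a y).card + (S.filter fun y => a v < a y ∧ a y ≤ a x).card := by
    rw [← Finset.card_filter_add_card_filter_not (s := S.filter fun y => a v < a y)
      (fun y => a x < a y), Finset.filter_filter, Finset.filter_filter]
    simp only [not_lt]
    congr 2
    ext y
    simp only [Finset.mem_filter]
    exact ⟨fun hy => ⟨hy.1, hy.2.2⟩, fun hy => ⟨hy.1, hvx.trans hy.2, hy.2⟩⟩
  rw [h v hv, h x hx, hcard]
  push_cast
  ring

/-- A block `W` which lies above `v₀` before the first step, and drops below everything
that separates it from `v₀`, cannot stay below `u` after the next step. -/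
theorem exists_lt_of_reverseStep {S W : Finset α} {a b c : α → ℚ} {C C' : ℚ}
    (hab : ReverseStep S C a b) (hbc : ReverseStep S C' b c)
    (ha : Function.Injective a) (hb : Function.Injective b)
    (hWS : W ⊆ S) (hW : W.Nonempty) {u v₀ : α} (hu : u ∈ S) (hv₀ : v₀ ∈ S) (hv₀W : v₀ ∉ W)
    (hv₀lt : ∀ x ∈ W, a v₀ < a x)
    (hsep : ∀ v ∈ S, v ∉ W → a v₀ ≤ a v → (∃ x ∈ W, a v < a x) → b u ≤ b v)
    (hbu : ∀ x ∈ W, b x < b u) : ∃ x ∈ W, c u < c x := by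
  classical
  by_contra! hcu
  have hdown : ∀ x ∈ W, b u - b x < 1 + (W.filter fun y => a y < a x).card := by
    intro x hx
    obtain ⟨v, hvmem, hvmax⟩ := Finset.exists_max_image
      (S.filter fun v => v ∉ W ∧ a v < a x) a ⟨v₀, by simp [hv₀, hv₀W, hv₀lt x hx]⟩
    simp only [Finset.mem_filter] at hvmem hvmax
    have hbv := hsep v hvmem.1 hvmem.2.1 (hvmax v₀ ⟨hv₀, hv₀W, hv₀lt x hx⟩)
      ⟨x, hx, hvmem.2.2⟩
    have hsub := hab.sub_eq hvmem.1 (hWS hx) hvmem.2.2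
    have hle : (S.filter fun y => a v < a y ∧ a y ≤ a x).card ≤
        (W.filter fun y => a y < a x).card + 1 := by
      refine (Finset.card_le_card ?_).trans (Finset.card_insert_le x _)
      intro y hy
      simp only [Finset.mem_filter, Finset.mem_insert] at hy ⊢
      rcases hy.2.2.lt_or_eq with hlt | heq
      · refine Or.inr ⟨?_, hlt⟩
        by_contra hyW
        exact absurd (hvmax y ⟨hy.1, hyW, hlt⟩) (not_le.2 hy.2.1)
      · exact Or.inl (ha heq)
    have hleq : ((S.filter fun y => a v < a y ∧ a y ≤ a x).card : ℚ) ≤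
        (W.filter fun y => a y < a x).card + 1 := by exact_mod_cast hle
    linarith [hvmem.2.2]
  have hup : ∀ x ∈ W, 1 + ((W.filter fun y => b x < b y).card : ℚ) ≤ b u - b x := by
    intro x hx
    have hsub := hbc.sub_eq (hWS hx) hu (hbu x hx)
    have hle : (W.filter fun y => b x < b y).card + 1 ≤
        (S.filter fun y => b x < b y ∧ b y ≤ b u).card := by
      have huW : u ∉ W.filter fun y => b x < b y := fun h =>
        (hbu u (Finset.mem_filter.1 h).1).false
      rw [← Finset.card_insert_of_notMem huW]
      refine Finset.card_le_card ?_
      intro y hy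
      simp only [Finset.mem_filter, Finset.mem_insert] at hy ⊢
      rcases hy with rfl | hy
      · exact ⟨hu, hbu x hx, le_rfl⟩
      · exact ⟨hWS hy.1, hy.2, (hbu y hy.1).le⟩
    have hleq : ((W.filter fun y => b x < b y).card : ℚ) + 1 ≤
        (S.filter fun y => b x < b y ∧ b y ≤ b u).card := by exact_mod_cast hle
    linarith [hcu x hx]
  have hlt : ∑ x ∈ W, (1 + ((W.filter fun y => b x < b y).card : ℚ)) <
      ∑ x ∈ W, (1 + ((W.filter fun y => a y < a x).card : ℚ)) :=
    Finset.sum_lt_sum_of_nonempty hW fun x hx => (hup x hx).trans_lt (hdown x hx)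
  have heq : ∑ x ∈ W, (W.filter fun y => b x < b y).card =
      ∑ x ∈ W, (W.filter fun y => a y < a x).card := by
    rw [sum_card_filter_lt_comm]
    have h₁ := two_mul_sum_card_filter_lt W ha
    have h₂ := two_mul_sum_card_filter_lt W hb
    omega
  have heqq : ∑ x ∈ W, ((W.filter fun y => b x < b y).card : ℚ) =
      ∑ x ∈ W, ((W.filter fun y => a y < a x).card : ℚ) := by exact_mod_cast heq
  rw [Finset.sum_add_distrib, Finset.sum_add_distrib, heqq] at hlt
  exact hlt.false

/-- A set containing the initially lowest member of `S`, and closed under absorbing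
the members that cross it from below, consists of the lowest members of `S` at all times
before `T`. -/
theorem lt_of_closed_of_reverseStep {S U : Finset α} {f : ℕ → α → ℚ} {C : ℚ} {T : ℕ}
    (hstep : ∀ j, ReverseStep S C (f j) (f (j + 1))) (hinj : ∀ j, Function.Injective (f j))
    (hUS : U ⊆ S)
    (hclosed : ∀ j < T, ∀ x ∈ S, ∀ u ∈ U, f j x < f j u →
      ∀ u' ∈ U, f (j + 1) u' < f (j + 1) x → x ∈ U)
    {x₀ : α} (hx₀ : x₀ ∈ U) (hmin : ∀ x ∈ S, f 0 x₀ ≤ f 0 x)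
    (hone : T = 1 → U = {x₀}) :
    ∀ j < T, ∀ u ∈ U, ∀ x ∈ S, x ∉ U → f j u < f j x := by
  classical
  have hstay : ∀ j < T, ∀ x ∈ S, x ∉ U → ∀ u ∈ U, f j x < f j u →
      ∀ u' ∈ U, f (j + 1) x < f (j + 1) u' := by
    intro j hj x hx hxU u hu hlt u' hu'
    refine lt_of_le_of_ne (not_lt.1 fun h => hxU (hclosed j hj x hx u hu hlt u' hu' h)) ?_
    intro h
    exact hxU (hinj _ h ▸ hu')
  have hnotop : ∀ j < T, ∀ x ∈ S, x ∉ U → ∃ u ∈ U, f j u < f j x := by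
    intro j
    induction j with
    | zero =>
      intro _ x hx hxU
      exact ⟨x₀, hx₀, lt_of_le_of_ne (hmin x hx) fun h => hxU (hinj _ h ▸ hx₀)⟩
    | succ j ih =>
      intro hj x hx hxU
      by_contra! hxle
      obtain ⟨v₀, hv₀, hv₀min⟩ := Finset.exists_min_image S (f j) ⟨x, hx⟩
      have hv₀U : v₀ ∈ U := by
        by_contra hv₀U
        obtain ⟨u, hu, hlt⟩ := ih (by omega) v₀ hv₀ hv₀U
        exact absurd (hv₀min u (hUS hu)) (not_le.2 hlt)
      obtain ⟨u, hu, humin⟩ := Finset.exists_min_image U (f (j + 1)) ⟨x₀, hx₀⟩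
      have hne : ∀ y, y ∉ U → f (j + 1) y ≤ f (j + 1) u → f (j + 1) y < f (j + 1) u :=
        fun y hy hle => lt_of_le_of_ne hle fun h => hy (hinj _ h ▸ hu)
      obtain ⟨w, hw, hwlt⟩ := exists_lt_of_reverseStep
        (W := S.filter fun y => y ∉ U ∧ f (j + 1) y < f (j + 1) u)
        (hstep j) (hstep (j + 1)) (hinj j) (hinj (j + 1)) (Finset.filter_subset _ _)
        ⟨x, by simp [hx, hxU, hne x hxU (hxle u hu)]⟩ (hUS hu) hv₀ (by simp [hv₀U])
        (by
          intro y hy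
          simp only [Finset.mem_filter] at hy
          exact lt_of_le_of_ne (hv₀min y hy.1) fun h => hy.2.1 (hinj _ h ▸ hv₀U))
        (by
          intro v hv hvW _ _
          simp only [Finset.mem_filter, not_and, not_lt] at hvW
          by_cases hvU : v ∈ U
          · exact humin v hvU
          · exact hvW hv hvU)
        (by
          intro y hy
          exact (Finset.mem_filter.1 hy).2.2)
      simp only [Finset.mem_filter] at hw
      exact absurd (hstay (j + 1) hj w hw.1 hw.2.1 u hu hw.2.2 u hu) hwlt.asymm
  have hprefix : ∀ j, j + 1 < T → ∀ u ∈ U, ∀ x ∈ S, x ∉ U → f j u < f j x := by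
    intro j hj u hu x hx hxU
    by_contra! hle
    have hlt : f j x < f j u := lt_of_le_of_ne hle fun h => hxU (hinj _ h ▸ hu)
    obtain ⟨u', hu', hlt'⟩ := hnotop (j + 1) hj x hx hxU
    exact absurd (hstay j (by omega) x hx hxU u hu hlt u' hu') hlt'.asymm
  intro j hj u hu w hw hwU
  by_cases hjT : j + 1 < T
  · exact hprefix j hjT u hu w hw hwU
  by_cases hj0 : j = 0
  · subst hj0
    have hU := hone (by omega)
    subst hU
    rw [Finset.mem_singleton] at hu
    subst hu
    exact lt_of_le_of_ne (hmin w hw) fun h => hwU (hinj _ h ▸ hx₀)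
  obtain ⟨i, rfl⟩ : ∃ i, j = i + 1 := ⟨j - 1, by omega⟩
  by_contra! hle
  have hltwu : f (i + 1) w < f (i + 1) u := lt_of_le_of_ne hle fun h => hwU (hinj _ h ▸ hu)
  obtain ⟨v₀, hv₀, hv₀max⟩ := Finset.exists_max_image U (f i) ⟨u, hu⟩
  rcases lt_or_ge (f (i + 1) w) (f (i + 1) v₀) with hcase | hcase
  · obtain ⟨β, hβ, hβmin⟩ := Finset.exists_min_image
      (U.filter fun y => f (i + 1) w < f (i + 1) y) (f (i + 1)) ⟨u, by simp [hu, hltwu]⟩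
    simp only [Finset.mem_filter] at hβ hβmin
    obtain ⟨y, hy, hylt⟩ := exists_lt_of_reverseStep
      (W := S.filter fun y => y ∉ U ∧ f (i + 1) y < f (i + 1) β)
      (hstep i) (hstep (i + 1)) (hinj i) (hinj (i + 1)) (Finset.filter_subset _ _)
      ⟨w, by simp [hw, hwU, hβ.2]⟩ (hUS hβ.1) (hUS hv₀) (by simp [hv₀])
      (by
        intro y hy
        simp only [Finset.mem_filter] at hy
        exact hprefix i hj v₀ hv₀ y hy.1 hy.2.1)
      (by
        intro v hv hvW hle _
        simp only [Finset.mem_filter, not_and, not_lt] at hvW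
        by_cases hvU : v ∈ U
        · have : v = v₀ := hinj i (le_antisymm (hv₀max v hvU) hle)
          subst this
          exact hβmin v ⟨hvU, hcase⟩
        · exact hvW hv hvU)
      (by
        intro y hy
        exact (Finset.mem_filter.1 hy).2.2)
    simp only [Finset.mem_filter] at hy
    exact absurd (hstay (i + 1) hj y hy.1 hy.2.1 β hβ.1 hy.2.2 β hβ.1) hylt.asymm
  · obtain ⟨y, hy, hylt⟩ := exists_lt_of_reverseStep
      (W := U.filter fun y => f (i + 1) w < f (i + 1) y)
      ((hstep i).neg (hinj i)) ((hstep (i + 1)).neg (hinj (i + 1)))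
      (neg_injective.comp (hinj i)) (neg_injective.comp (hinj (i + 1)))
      ((Finset.filter_subset _ _).trans hUS)
      ⟨u, by simp [hu, hltwu]⟩ hw (hUS hv₀) (by simp [hcase])
      (by
        intro y hy
        simp only [Finset.mem_filter] at hy
        refine neg_lt_neg (lt_of_le_of_ne (hv₀max y hy.1) fun h => ?_)
        have := hinj _ h
        subst this
        exact absurd hy.2 (not_lt.2 hcase))
      (by
        intro v hv hvW hle _
        simp only [Finset.mem_filter, not_and, not_lt] at hvW
        refine neg_le_neg (hvW ?_)
        by_contra hvU
        exact absurd (hprefix i hj v₀ hv₀ v hv hvU) (not_lt.2 (neg_le_neg_iff.1 hle)))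
      (by
        intro y hy
        exact neg_lt_neg (Finset.mem_filter.1 hy).2)
    simp only [Finset.mem_filter] at hy
    exact absurd (hstay (i + 1) hj w hw hwU y hy.1 hy.2 y hy.1) (neg_lt_neg_iff.1 hylt).asymm

end ReverseDynamics

theorem sum_le_sum_of_card_eq {β : Type*} [DecidableEq β] {A B : Finset β} {g : β → ℤ}
    (hcard : A.card = B.card) (h : ∀ a ∈ A \ B, ∀ b ∈ B \ A, g a ≤ g b) :
    ∑ a ∈ A, g a ≤ ∑ b ∈ B, g b := by
  rw [← Finset.sum_inter_add_sum_sdiff A B, ← Finset.sum_inter_add_sum_sdiff B A,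
    Finset.inter_comm B A]
  have hsd : (A \ B).card = (B \ A).card := by
    have h₁ := Finset.card_sdiff_add_card_inter A B
    have h₂ := Finset.card_sdiff_add_card_inter B A
    rw [Finset.inter_comm] at h₂
    omega
  gcongr 1
  rcases (B \ A).eq_empty_or_nonempty with hBA | hBA
  · rw [hBA, Finset.card_empty, Finset.card_eq_zero] at hsd
    rw [hsd, hBA]
  · obtain ⟨b, hb, hbmin⟩ := Finset.exists_min_image (B \ A) g hBA
    calc ∑ a ∈ A \ B, g a ≤ (A \ B).card • g b :=
          Finset.sum_le_card_nsmul _ _ _ fun a ha => h a ha b hb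
      _ = (B \ A).card • g b := by rw [hsd]
      _ ≤ ∑ b ∈ B \ A, g b := Finset.card_nsmul_le_sum _ _ _ hbmin

theorem IsVote.exists_eq {O : Type*} [Fintype O] {q : O → ℕ} (hq : IsVote q)
    {n : ℕ} (hn : n < Fintype.card O) :
    ∃ o, q o = n := by
  have himage : univ.image q = range (Fintype.card O) :=
    Finset.eq_of_subset_of_card_le
      (fun n hn => by
        obtain ⟨o, -, rfl⟩ := Finset.mem_image.1 hn
        exact Finset.mem_range.2 (hq.2 o))
      (by rw [Finset.card_image_of_injective _ hq.1, Finset.card_range, Finset.card_univ])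
  have hmem : n ∈ univ.image q := himage ▸ Finset.mem_range.2 hn
  simpa using hmem

theorem sum_vote_le_of_top {q b : O → ℕ} (hq : IsVote q) (hb : IsVote b) {U U' : Finset O}
    (hcard : U'.card = U.card) (hU : ∀ u ∈ U, ∀ x ∉ U, b x < b u) :
    ∑ c ∈ U', (q c : ℤ) ≤ ∑ c ∈ U, (b c : ℤ) := by
  rw [← Finset.sum_image (f := fun n : ℕ => (n : ℤ)) hq.1.injOn,
    ← Finset.sum_image (f := fun n : ℕ => (n : ℤ)) hb.1.injOn]
  refine sum_le_sum_of_card_eq ?_ ?_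
  · rw [Finset.card_image_of_injective _ hq.1, Finset.card_image_of_injective _ hb.1, hcard]
  · intro n hn n' hn'
    simp only [Finset.mem_sdiff, Finset.mem_image, not_exists, not_and] at hn hn'
    obtain ⟨⟨c, -, rfl⟩, hnU⟩ := hn
    obtain ⟨⟨u, hu, rfl⟩, -⟩ := hn'
    obtain ⟨x, hx⟩ := hb.exists_eq (hq.2 c)
    have := hU u hu x fun hxU => hnU x hxU hx
    rw [hx] at this
    exact_mod_cast this.le

theorem sum_le_sum_vote_of_bot {q b : O → ℕ} (hq : IsVote q) (hb : IsVote b) {D D' : Finset O}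
    (hcard : D'.card = D.card) (hD : ∀ d ∈ D, ∀ x ∉ D, b d < b x) :
    ∑ c ∈ D, (b c : ℤ) ≤ ∑ c ∈ D', (q c : ℤ) := by
  rw [← Finset.sum_image (f := fun n : ℕ => (n : ℤ)) hq.1.injOn,
    ← Finset.sum_image (f := fun n : ℕ => (n : ℤ)) hb.1.injOn]
  refine sum_le_sum_of_card_eq ?_ ?_
  · rw [Finset.card_image_of_injective _ hq.1, Finset.card_image_of_injective _ hb.1, hcard]
  · intro n hn n' hn'
    simp only [Finset.mem_sdiff, Finset.mem_image, not_exists, not_and] at hn hn'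
    obtain ⟨⟨d, hd, rfl⟩, -⟩ := hn
    obtain ⟨⟨c, -, rfl⟩, hnD⟩ := hn'
    obtain ⟨x, hx⟩ := hb.exists_eq (hq.2 c)
    have := hD d hd x fun hxD => hnD x hxD hx
    rw [hx] at this
    exact_mod_cast this.le

/-- The Borda score perturbed by less than one so that ties are resolved as prescribed by
the tie-breaking order. -/
noncomputable def tieScore (tb : O → ℕ) (P : List (O → ℕ)) (c : O) : ℚ :=
  (score bordaVec P c : ℚ) - (tb c : ℚ) / (1 + ∑ o, (tb o : ℚ))

theorem tieScore_lt_iff {O : Type*} [Fintype O] (tb : O → ℕ) (P : List (O → ℕ)) (c c' : O) :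
    tieScore tb P c' < tieScore tb P c ↔
      score bordaVec P c' < score bordaVec P c ∨
        (score bordaVec P c' = score bordaVec P c ∧ tb c < tb c') := by
  have hM : (0 : ℚ) < 1 + ∑ o, (tb o : ℚ) := by positivity
  have hbound : ∀ x : O, 0 ≤ (tb x : ℚ) / (1 + ∑ o, (tb o : ℚ)) ∧
      (tb x : ℚ) / (1 + ∑ o, (tb o : ℚ)) < 1 := by
    intro x
    refine ⟨by positivity, (div_lt_one hM).2 ?_⟩
    have := Finset.single_le_sum (f := fun o => (tb o : ℚ)) (fun _ _ => by positivity)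
      (Finset.mem_univ x)
    linarith
  obtain ⟨h₀, h₁⟩ := hbound c
  obtain ⟨h₀', h₁'⟩ := hbound c'
  unfold tieScore
  rcases lt_trichotomy (score bordaVec P c') (score bordaVec P c) with h | h | h
  · have hq : (score bordaVec P c' : ℚ) + 1 ≤ score bordaVec P c := by exact_mod_cast h
    exact iff_of_true (by linarith) (Or.inl h)
  · rw [h, sub_lt_sub_iff_left, div_lt_div_iff_of_pos_right hM, Nat.cast_lt]
    simp
  · have hq : (score bordaVec P c : ℚ) + 1 ≤ score bordaVec P c' := by exact_mod_cast h
    refine iff_of_false (by linarith) ?_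
    rintro (h' | ⟨h', -⟩) <;> omega

theorem tieScore_injective {tb : O → ℕ} (htb : Function.Injective tb) (P : List (O → ℕ)) :
    Function.Injective (tieScore tb P) := by
  intro x y hxy
  have h₁ := (tieScore_lt_iff tb P x y).not.1 hxy.not_gt
  have h₂ := (tieScore_lt_iff tb P y x).not.1 hxy.symm.not_gt
  refine htb ?_
  omega

theorem swf_eq_card (tb : O → ℕ) (P : List (O → ℕ)) (c : O) :
    swf bordaVec tb P c = (univ.filter fun c' => tieScore tb P c' < tieScore tb P c).card := by
  unfold swf
  congr 1
  ext c'
  simp only [Finset.mem_filter, tieScore_lt_iff]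

theorem swf_lt_iff (tb : O → ℕ) (P : List (O → ℕ)) (x y : O) :
    swf bordaVec tb P x < swf bordaVec tb P y ↔ tieScore tb P x < tieScore tb P y := by
  have hmono : ∀ x y : O, tieScore tb P x ≤ tieScore tb P y →
      swf bordaVec tb P x ≤ swf bordaVec tb P y := by
    intro x y h
    rw [swf_eq_card, swf_eq_card]
    refine Finset.card_le_card fun z hz => ?_
    simp only [Finset.mem_filter, Finset.mem_univ, true_and] at hz ⊢
    exact hz.trans_le h
  refine ⟨fun h => ?_, fun h => ?_⟩
  · by_contra! hle
    exact absurd (hmono y x hle) (not_le.2 h)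
  · rw [swf_eq_card, swf_eq_card]
    refine Finset.card_lt_card ⟨fun z hz => ?_, fun hss => ?_⟩
    · simp only [Finset.mem_filter, Finset.mem_univ, true_and] at hz ⊢
      exact hz.trans h
    · have hx := @hss x (by simpa using h)
      simp at hx

theorem score_le_of_swf_lt {tb : O → ℕ} {P : List (O → ℕ)} {x y : O}
    (h : swf bordaVec tb P x < swf bordaVec tb P y) :
    score bordaVec P x ≤ score bordaVec P y := by
  rw [swf_lt_iff, tieScore_lt_iff] at h
  omega

theorem swf_injective {tb : O → ℕ} (htb : Function.Injective tb) (P : List (O → ℕ)) :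
    Function.Injective (swf bordaVec tb P) := by
  intro x y hxy
  refine tieScore_injective htb P (le_antisymm ?_ ?_)
  · rw [← not_lt, ← swf_lt_iff]
    omega
  · rw [← not_lt, ← swf_lt_iff]
    omega

theorem isVote_swf {tb : O → ℕ} (htb : Function.Injective tb) (P : List (O → ℕ)) :
    IsVote (swf bordaVec tb P) := by
  refine ⟨swf_injective htb P, fun c => ?_⟩
  rw [swf_eq_card, ← Finset.card_univ]
  exact Finset.card_lt_card
    (Finset.filter_ssubset.2 ⟨c, Finset.mem_univ c, lt_irrefl _⟩)

theorem buildVote_lt_of_notMem_of_mem (r : O → ℕ) {H : Finset O} {x y : O} (hx : x ∉ H)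
    (hy : y ∈ H) : buildVote r H x < buildVote r H y := by
  unfold buildVote
  rw [if_neg hx, if_pos hy]
  refine lt_of_lt_of_le ?_ (Nat.le_add_right _ _)
  rw [← Finset.card_compl]
  refine Finset.card_lt_card ⟨fun z hz => ?_, fun hss => ?_⟩
  · simp only [Finset.mem_filter, Finset.mem_univ, true_and] at hz
    simpa using hz.1
  · have := @hss x (by simpa using hx)
    simp at this

theorem buildVote_lt_of_lt (r : O → ℕ) {H : Finset O} {x y : O} (hxy : x ∈ H ↔ y ∈ H)
    (h : r y < r x) : buildVote r H x < buildVote r H y := by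
  unfold buildVote
  by_cases hx : x ∈ H
  · have hy := hxy.1 hx
    rw [if_pos hx, if_pos hy]
    refine Nat.add_lt_add_left (Finset.card_lt_card ⟨fun z hz => ?_, fun hss => ?_⟩) _
    · simp only [Finset.mem_filter] at hz ⊢
      exact ⟨hz.1, h.trans hz.2⟩
    · have := @hss x (by simp [hx, h])
      simp at this
  · have hy : y ∉ H := fun hy => hx (hxy.2 hy)
    rw [if_neg hx, if_neg hy]
    refine Finset.card_lt_card ⟨fun z hz => ?_, fun hss => ?_⟩
    · simp only [Finset.mem_filter, Finset.mem_univ, true_and] at hz ⊢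
      exact ⟨hz.1, h.trans hz.2⟩
    · have := @hss x (by simp [hx, h])
      simp at this

theorem buildVote_lt_iff {r : O → ℕ} (hr : Function.Injective r) {H : Finset O} {x y : O}
    (hxy : x ∈ H ↔ y ∈ H) : buildVote r H x < buildVote r H y ↔ r y < r x := by
  refine ⟨fun h => ?_, buildVote_lt_of_lt r hxy⟩
  rcases lt_trichotomy (r y) (r x) with h' | h' | h'
  · exact h'
  · rw [hr h'] at h
    exact absurd h (lt_irrefl _)
  · exact absurd (buildVote_lt_of_lt r hxy.symm h') h.asymm

theorem isVote_buildVote {r : O → ℕ} (hr : Function.Injective r) (H : Finset O) :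
    IsVote (buildVote r H) := by
  constructor
  · intro x y hxy
    by_cases hx : x ∈ H <;> by_cases hy : y ∈ H
    · refine hr (le_antisymm ?_ ?_)
      · rw [← not_lt, ← buildVote_lt_iff hr (H := H) (by simp [hx, hy])]
        omega
      · rw [← not_lt, ← buildVote_lt_iff hr (H := H) (by simp [hx, hy])]
        omega
    · exact absurd hxy (buildVote_lt_of_notMem_of_mem r hy hx).ne'
    · exact absurd hxy (buildVote_lt_of_notMem_of_mem r hx hy).ne
    · refine hr (le_antisymm ?_ ?_)
      · rw [← not_lt, ← buildVote_lt_iff hr (H := H) (by simp [hx, hy])]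
        omega
      · rw [← not_lt, ← buildVote_lt_iff hr (H := H) (by simp [hx, hy])]
        omega
  · intro x
    unfold buildVote
    by_cases hx : x ∈ H
    · rw [if_pos hx]
      have h₁ : (H.filter fun h => r x < r h).card < H.card :=
        Finset.card_lt_card (Finset.filter_ssubset.2 ⟨x, hx, lt_irrefl _⟩)
      have h₂ := Finset.card_le_univ H
      omega
    · rw [if_neg hx, ← Finset.card_univ]
      exact Finset.card_lt_card (Finset.filter_ssubset.2 ⟨x, Finset.mem_univ x, by simp⟩)

section Stages

variable {tb : O → ℕ} {P : List (O → ℕ)} {H : Finset O}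

theorem score_append {O : Type*} (sc : ℕ → ℤ) (P Q : List (O → ℕ)) (c : O) :
    score sc (P ++ Q) c = score sc P c + score sc Q c := by
  simp [score]

theorem score_stageProfile_succ (n : ℕ) (c : O) :
    score bordaVec (stageProfile bordaVec tb P H (n + 1)) c =
      score bordaVec (stageProfile bordaVec tb P H n) c + stageVote bordaVec tb P H (n + 1) c := by
  rw [stageProfile, score_append]
  simp [score, stageVote, bordaVec]

theorem isVote_stageVote (htb : Function.Injective tb) (l : ℕ) :
    IsVote (stageVote bordaVec tb P H l) :=
  isVote_buildVote (swf_injective htb _) H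

theorem stageVote_succ_lt_iff (htb : Function.Injective tb) (j : ℕ) {x y : O}
    (hxy : x ∈ H ↔ y ∈ H) :
    stageVote bordaVec tb P H (j + 1) x < stageVote bordaVec tb P H (j + 1) y ↔
      tieScore tb (P ++ stageProfile bordaVec tb P H j) y <
        tieScore tb (P ++ stageProfile bordaVec tb P H j) x := by
  rw [stageVote, buildVote_lt_iff (swf_injective htb _) hxy, swf_lt_iff, Nat.add_sub_cancel]

theorem tieScore_stage_succ (j : ℕ) (x : O) :
    tieScore tb (P ++ stageProfile bordaVec tb P H (j + 1)) x =
      tieScore tb (P ++ stageProfile bordaVec tb P H j) x +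
        stageVote bordaVec tb P H (j + 1) x := by
  unfold tieScore
  rw [score_append, score_append, score_stageProfile_succ]
  push_cast
  ring

theorem reverseStep_stage_mem (j : ℕ) :
    ReverseStep H ((Fintype.card O - H.card : ℕ) : ℚ)
      (tieScore tb (P ++ stageProfile bordaVec tb P H j))
      (tieScore tb (P ++ stageProfile bordaVec tb P H (j + 1))) := by
  intro x hx
  rw [tieScore_stage_succ, stageVote, buildVote, if_pos hx, Nat.add_sub_cancel]
  simp only [swf_lt_iff]
  push_cast
  ring

theorem reverseStep_stage_notMem (j : ℕ) :
    ReverseStep (univ \ H) 0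
      (tieScore tb (P ++ stageProfile bordaVec tb P H j))
      (tieScore tb (P ++ stageProfile bordaVec tb P H (j + 1))) := by
  intro x hx
  have hx' : x ∉ H := (Finset.mem_sdiff.1 hx).2
  rw [tieScore_stage_succ, stageVote, buildVote, if_neg hx', Nat.add_sub_cancel]
  simp only [swf_lt_iff]
  rw [add_zero]
  congr 3
  ext y
  simp

theorem mem_botWithin_one {r : O → ℕ} {S : Finset O} {x : O} :
    x ∈ botWithin r S 1 ↔ x ∈ S ∧ ∀ y ∈ S, r x ≤ r y := by
  simp [botWithin, Finset.filter_eq_empty_iff]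

theorem mem_topWithin_one {r : O → ℕ} {S : Finset O} {x : O} :
    x ∈ topWithin r S 1 ↔ x ∈ S ∧ ∀ y ∈ S, r y ≤ r x := by
  simp [topWithin, Finset.filter_eq_empty_iff]

theorem mem_of_stageVote_lt {l : ℕ} {x y : O} (hx : x ∈ H)
    (h : stageVote bordaVec tb P H l x < stageVote bordaVec tb P H l y) : y ∈ H := by
  by_contra hy
  exact absurd (buildVote_lt_of_notMem_of_mem _ hy hx) h.asymm

theorem Uset_subset (pt : O → ℕ) (k : ℕ) : Uset bordaVec tb P pt H k ⊆ H := by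
  intro u hu
  obtain ⟨s, hs⟩ := (Finset.mem_filter.1 hu).2
  induction s generalizing u with
  | zero => exact (mem_botWithin_one.1 hs).1
  | succ s ih =>
    rcases Finset.mem_union.1 hs with hs | hs
    · exact ih (Finset.mem_filter.2 ⟨Finset.mem_univ _, s, hs⟩) hs
    · obtain ⟨l, -, -, ⟨u', hu', hlt⟩, -⟩ := (Finset.mem_filter.1 hs).2
      exact mem_of_stageVote_lt (ih (Finset.mem_filter.2 ⟨Finset.mem_univ _, s, hu'⟩) hu') hlt

theorem Dset_subset (pt : O → ℕ) (k : ℕ) : Dset bordaVec tb P pt H k ⊆ univ \ H := by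
  intro d hd
  obtain ⟨s, hs⟩ := (Finset.mem_filter.1 hd).2
  induction s generalizing d with
  | zero => exact (mem_topWithin_one.1 hs).1
  | succ s ih =>
    rcases Finset.mem_union.1 hs with hs | hs
    · exact ih (Finset.mem_filter.2 ⟨Finset.mem_univ _, s, hs⟩) hs
    · obtain ⟨l, -, -, ⟨d', hd', hlt⟩, -⟩ := (Finset.mem_filter.1 hs).2
      have := ih (Finset.mem_filter.2 ⟨Finset.mem_univ _, s, hd'⟩) hd'
      simp only [Finset.mem_sdiff, Finset.mem_univ, true_and] at this ⊢
      exact fun hdH => this (mem_of_stageVote_lt hdH hlt)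

theorem mem_Uset_of_crosses {pt : O → ℕ} {k l : ℕ} (hl : 1 ≤ l) (hlk : l < k) {x u u' : O}
    (hu : u ∈ Uset bordaVec tb P pt H k) (hu' : u' ∈ Uset bordaVec tb P pt H k)
    (h : stageVote bordaVec tb P H l u < stageVote bordaVec tb P H l x)
    (h' : stageVote bordaVec tb P H (l + 1) x < stageVote bordaVec tb P H (l + 1) u') :
    x ∈ Uset bordaVec tb P pt H k := by
  have hmono : Monotone (Uaux bordaVec tb P pt H k) :=
    monotone_nat_of_le_succ fun s => Finset.subset_union_left
  obtain ⟨s, hs⟩ := (Finset.mem_filter.1 hu).2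
  obtain ⟨s', hs'⟩ := (Finset.mem_filter.1 hu').2
  refine Finset.mem_filter.2 ⟨Finset.mem_univ _, max s s' + 1, Finset.mem_union_right _ ?_⟩
  exact Finset.mem_filter.2 ⟨Finset.mem_univ _, l, hl, hlk,
    ⟨u, hmono (le_max_left s s') hs, h⟩, ⟨u', hmono (le_max_right s s') hs', h'⟩⟩

theorem mem_Dset_of_crosses {pt : O → ℕ} {k l : ℕ} (hl : 1 ≤ l) (hlk : l < k) {x d d' : O}
    (hd : d ∈ Dset bordaVec tb P pt H k) (hd' : d' ∈ Dset bordaVec tb P pt H k)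
    (h : stageVote bordaVec tb P H l x < stageVote bordaVec tb P H l d)
    (h' : stageVote bordaVec tb P H (l + 1) d' < stageVote bordaVec tb P H (l + 1) x) :
    x ∈ Dset bordaVec tb P pt H k := by
  have hmono : Monotone (Daux bordaVec tb P pt H k) :=
    monotone_nat_of_le_succ fun s => Finset.subset_union_left
  obtain ⟨s, hs⟩ := (Finset.mem_filter.1 hd).2
  obtain ⟨s', hs'⟩ := (Finset.mem_filter.1 hd').2
  refine Finset.mem_filter.2 ⟨Finset.mem_univ _, max s s' + 1, Finset.mem_union_right _ ?_⟩
  exact Finset.mem_filter.2 ⟨Finset.mem_univ _, l, hl, hlk,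
    ⟨d, hmono (le_max_left s s') hs, h⟩, ⟨d', hmono (le_max_right s s') hs', h'⟩⟩

theorem tieScore_le_iff_swf_le (P : List (O → ℕ)) (x y : O) :
    tieScore tb P x ≤ tieScore tb P y ↔ swf bordaVec tb P x ≤ swf bordaVec tb P y := by
  rw [← not_lt, ← not_lt, swf_lt_iff]

theorem Uset_two_subset (htb : Function.Injective tb) :
    Uset bordaVec tb P (swf bordaVec tb P) H 2 ⊆ botWithin (swf bordaVec tb P) H 1 := by
  intro u hu
  obtain ⟨s, hs⟩ := (Finset.mem_filter.1 hu).2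
  clear hu
  induction s generalizing u with
  | zero => exact hs
  | succ s ih =>
    rcases Finset.mem_union.1 hs with hs | hs
    · exact ih hs
    · obtain ⟨l, hl, hl2, ⟨u', hu', hlt⟩, -⟩ := (Finset.mem_filter.1 hs).2
      obtain rfl : l = 0 + 1 := by omega
      have hmin := mem_botWithin_one.1 (ih hu')
      have huH := mem_of_stageVote_lt hmin.1 hlt
      rw [stageVote_succ_lt_iff htb 0 (by simp [huH, hmin.1])] at hlt
      simp only [stageProfile, List.append_nil, ← swf_lt_iff] at hlt
      exact absurd (hmin.2 u huH) (not_le.2 hlt)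

theorem Dset_two_subset (htb : Function.Injective tb) :
    Dset bordaVec tb P (swf bordaVec tb P) H 2 ⊆
      topWithin (swf bordaVec tb P) (univ \ H) 1 := by
  intro d hd
  obtain ⟨s, hs⟩ := (Finset.mem_filter.1 hd).2
  clear hd
  induction s generalizing d with
  | zero => exact hs
  | succ s ih =>
    rcases Finset.mem_union.1 hs with hs | hs
    · exact ih hs
    · obtain ⟨l, hl, hl2, ⟨d', hd', hlt⟩, -⟩ := (Finset.mem_filter.1 hs).2
      obtain rfl : l = 0 + 1 := by omega
      have hmax := mem_topWithin_one.1 (ih hd')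
      have hd'H : d' ∉ H := (Finset.mem_sdiff.1 hmax.1).2
      have hdH : d ∉ H := fun h => hd'H (mem_of_stageVote_lt h hlt)
      rw [stageVote_succ_lt_iff htb 0 (by simp [hdH, hd'H])] at hlt
      simp only [stageProfile, List.append_nil, ← swf_lt_iff] at hlt
      exact absurd (hmax.2 d (by simp [hdH])) (not_le.2 hlt)

theorem exists_mem_Uset (hH : H.Nonempty) (k : ℕ) :
    ∃ x ∈ Uset bordaVec tb P (swf bordaVec tb P) H k,
      ∀ y ∈ H, swf bordaVec tb P x ≤ swf bordaVec tb P y := by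
  obtain ⟨x, hx, hmin⟩ := Finset.exists_min_image H (swf bordaVec tb P) hH
  exact ⟨x, Finset.mem_filter.2 ⟨Finset.mem_univ _, 0, mem_botWithin_one.2 ⟨hx, hmin⟩⟩, hmin⟩

theorem exists_mem_Dset (hH : (univ \ H).Nonempty) (k : ℕ) :
    ∃ x ∈ Dset bordaVec tb P (swf bordaVec tb P) H k,
      ∀ y ∈ univ \ H, swf bordaVec tb P y ≤ swf bordaVec tb P x := by
  obtain ⟨x, hx, hmax⟩ := Finset.exists_max_image (univ \ H) (swf bordaVec tb P) hH
  exact ⟨x, Finset.mem_filter.2 ⟨Finset.mem_univ _, 0, mem_topWithin_one.2 ⟨hx, hmax⟩⟩, hmax⟩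

/-- The first `k - 1` votes place `U` in the highest positions. -/
theorem stageVote_lt_of_mem_Uset (htb : Function.Injective tb) {k l : ℕ} (hl : 1 ≤ l)
    (hlk : l < k) {u x : O} (hu : u ∈ Uset bordaVec tb P (swf bordaVec tb P) H k)
    (hx : x ∉ Uset bordaVec tb P (swf bordaVec tb P) H k) :
    stageVote bordaVec tb P H l x < stageVote bordaVec tb P H l u := by
  have huH := Uset_subset _ _ hu
  by_cases hxH : x ∈ H
  swap
  · exact buildVote_lt_of_notMem_of_mem _ hxH huH
  obtain ⟨j, rfl⟩ : ∃ j, l = j + 1 := ⟨l - 1, by omega⟩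
  rw [stageVote_succ_lt_iff htb j (by simp [huH, hxH])]
  obtain ⟨x₀, hx₀, hmin⟩ := exists_mem_Uset (tb := tb) (P := P) ⟨u, huH⟩ k
  refine lt_of_closed_of_reverseStep (T := k - 1)
    (f := fun j => tieScore tb (P ++ stageProfile bordaVec tb P H j))
    reverseStep_stage_mem (fun j => tieScore_injective htb _) (Uset_subset _ _)
    ?_ hx₀ ?_ ?_ j (by omega) u hu x hxH hx
  · intro i hi y hy v hv hlt v' hv' hlt'
    have hvH := Uset_subset _ _ hv
    have hv'H := Uset_subset _ _ hv'
    rw [← stageVote_succ_lt_iff htb i (by simp [hvH, hy])] at hlt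
    rw [← stageVote_succ_lt_iff htb (i + 1) (by simp [hv'H, hy])] at hlt'
    exact mem_Uset_of_crosses (l := i + 1) (by omega) (by omega) hv hv' hlt hlt'
  · intro y hy
    simpa [stageProfile, tieScore_le_iff_swf_le] using hmin y hy
  · intro hk
    obtain rfl : k = 2 := by omega
    refine Finset.eq_singleton_iff_unique_mem.2 ⟨hx₀, fun y hy => ?_⟩
    have hy' := mem_botWithin_one.1 (Uset_two_subset htb hy)
    exact swf_injective htb P
      (le_antisymm (hy'.2 x₀ (Uset_subset _ _ hx₀)) (hmin y hy'.1))

/-- The first `k - 1` votes place `D` in the lowest positions. -/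
theorem stageVote_lt_of_mem_Dset (htb : Function.Injective tb) {k l : ℕ} (hl : 1 ≤ l)
    (hlk : l < k) {d x : O} (hd : d ∈ Dset bordaVec tb P (swf bordaVec tb P) H k)
    (hx : x ∉ Dset bordaVec tb P (swf bordaVec tb P) H k) :
    stageVote bordaVec tb P H l d < stageVote bordaVec tb P H l x := by
  have hdS := Dset_subset _ _ hd
  have hdH : d ∉ H := (Finset.mem_sdiff.1 hdS).2
  by_cases hxH : x ∈ H
  · exact buildVote_lt_of_notMem_of_mem _ hdH hxH
  obtain ⟨j, rfl⟩ : ∃ j, l = j + 1 := ⟨l - 1, by omega⟩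
  rw [stageVote_succ_lt_iff htb j (by simp [hdH, hxH])]
  obtain ⟨x₀, hx₀, hmax⟩ := exists_mem_Dset (tb := tb) (P := P) ⟨d, hdS⟩ k
  refine neg_lt_neg_iff.1 (lt_of_closed_of_reverseStep (T := k - 1)
    (f := fun j x => -tieScore tb (P ++ stageProfile bordaVec tb P H j) x)
    (fun j => (reverseStep_stage_notMem j).neg (tieScore_injective htb _))
    (fun j => neg_injective.comp (tieScore_injective htb _)) (Dset_subset _ _)
    ?_ hx₀ ?_ ?_ j (by omega) d hd x (by simp [hxH]) hx)
  · intro i hi y hy v hv hlt v' hv' hlt'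
    have hyH : y ∉ H := (Finset.mem_sdiff.1 hy).2
    have hvH : v ∉ H := (Finset.mem_sdiff.1 (Dset_subset _ _ hv)).2
    have hv'H : v' ∉ H := (Finset.mem_sdiff.1 (Dset_subset _ _ hv')).2
    rw [neg_lt_neg_iff, ← stageVote_succ_lt_iff htb i (by simp [hvH, hyH])] at hlt
    rw [neg_lt_neg_iff, ← stageVote_succ_lt_iff htb (i + 1) (by simp [hv'H, hyH])] at hlt'
    exact mem_Dset_of_crosses (l := i + 1) (by omega) (by omega) hv hv' hlt hlt'
  · intro y hy
    simpa [stageProfile, tieScore_le_iff_swf_le] using hmax y hy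
  · intro hk
    obtain rfl : k = 2 := by omega
    refine Finset.eq_singleton_iff_unique_mem.2 ⟨hx₀, fun y hy => ?_⟩
    have hy' := mem_topWithin_one.1 (Dset_two_subset htb hy)
    exact swf_injective htb P
      (le_antisymm (hmax y hy'.1) (hy'.2 x₀ (Dset_subset _ _ hx₀)))

theorem sum_score_le_sum_stageProfile (htb : Function.Injective tb) {U U' : Finset O}
    (hcard : U'.card = U.card) {n : ℕ}
    (hU : ∀ l, 1 ≤ l → l ≤ n → ∀ u ∈ U, ∀ x ∉ U,
      stageVote bordaVec tb P H l x < stageVote bordaVec tb P H l u)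
    {Q : List (O → ℕ)} (hlen : Q.length = n) (hQ : ∀ q ∈ Q, IsVote q) :
    ∑ c ∈ U', score bordaVec Q c ≤
      ∑ c ∈ U, score bordaVec (stageProfile bordaVec tb P H n) c := by
  induction Q generalizing n with
  | nil =>
    subst hlen
    simp [score, stageProfile]
  | cons q Q ih =>
    obtain ⟨n, rfl⟩ : ∃ j, n = j + 1 := ⟨n - 1, by simp at hlen; omega⟩
    have hrec := ih (n := n) (fun l h₁ h₂ => hU l h₁ (by omega)) (by simpa using hlen)
      (fun r hr => hQ r (List.mem_cons_of_mem _ hr))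
    have hfirst := sum_vote_le_of_top (hQ q List.mem_cons_self) (isVote_stageVote htb (n + 1))
      hcard (hU (n + 1) (by omega) le_rfl)
    simp only [score_stageProfile_succ, Finset.sum_add_distrib]
    have hcons : ∀ c, score bordaVec (q :: Q) c = q c + score bordaVec Q c := fun c => by
      simp [score, bordaVec]
    simp only [hcons, Finset.sum_add_distrib]
    linarith

theorem sum_stageProfile_le_sum_score (htb : Function.Injective tb) {D D' : Finset O}
    (hcard : D'.card = D.card) {n : ℕ}
    (hD : ∀ l, 1 ≤ l → l ≤ n → ∀ d ∈ D, ∀ x ∉ D,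
      stageVote bordaVec tb P H l d < stageVote bordaVec tb P H l x)
    {Q : List (O → ℕ)} (hlen : Q.length = n) (hQ : ∀ q ∈ Q, IsVote q) :
    ∑ c ∈ D, score bordaVec (stageProfile bordaVec tb P H n) c ≤
      ∑ c ∈ D', score bordaVec Q c := by
  induction Q generalizing n with
  | nil =>
    subst hlen
    simp [score, stageProfile]
  | cons q Q ih =>
    obtain ⟨n, rfl⟩ : ∃ j, n = j + 1 := ⟨n - 1, by simp at hlen; omega⟩
    have hrec := ih (n := n) (fun l h₁ h₂ => hD l h₁ (by omega)) (by simpa using hlen)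
      (fun r hr => hQ r (List.mem_cons_of_mem _ hr))
    have hfirst := sum_le_sum_vote_of_bot (hQ q List.mem_cons_self)
      (isVote_stageVote htb (n + 1)) hcard (hD (n + 1) (by omega) le_rfl)
    simp only [score_stageProfile_succ, Finset.sum_add_distrib]
    have hcons : ∀ c, score bordaVec (q :: Q) c = q c + score bordaVec Q c := fun c => by
      simp [score, bordaVec]
    simp only [hcons, Finset.sum_add_distrib]
    linarith

end Stages

theorem card_filter_mem_of_injOn {S : Finset O} {ρ : O → ℕ} (hinj : Set.InjOn ρ S)
    (hlt : ∀ x ∈ S, ρ x < S.card) {V : Finset ℕ} (hV : V ⊆ range S.card) :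
    (S.filter fun x => ρ x ∈ V).card = V.card := by
  have himage : S.image ρ = range S.card :=
    Finset.eq_of_subset_of_card_le
      (fun n hn => by
        obtain ⟨x, hx, rfl⟩ := Finset.mem_image.1 hn
        exact Finset.mem_range.2 (hlt x hx))
      (by rw [Finset.card_image_of_injOn hinj, Finset.card_range])
  have hfilter : (S.filter fun x => ρ x ∈ V).image ρ = V := by
    ext n
    simp only [Finset.mem_image, Finset.mem_filter]
    constructor
    · rintro ⟨x, hx, rfl⟩
      exact hx.2
    · intro hn
      obtain ⟨x, hx, rfl⟩ := Finset.mem_image.1 (himage ▸ hV hn)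
      exact ⟨x, ⟨hx, hn⟩, rfl⟩
  rw [← Finset.card_image_of_injOn (hinj.mono fun x hx => (Finset.mem_filter.1 hx).1), hfilter]

theorem card_topWithin {r : O → ℕ} (hr : Function.Injective r) (S : Finset O) {n : ℕ}
    (hn : n ≤ S.card) : (topWithin r S n).card = n := by
  have hmono : ∀ x y, y ∈ S → r x < r y →
      (S.filter fun o => r y < r o).card < (S.filter fun o => r x < r o).card := by
    intro x y hy h
    refine Finset.card_lt_card ⟨fun z hz => ?_, fun hss => ?_⟩
    · simp only [Finset.mem_filter] at hz ⊢
      exact ⟨hz.1, h.trans hz.2⟩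
    · have := @hss y (by simp [hy, h])
      simp at this
  have hcard := card_filter_mem_of_injOn (S := S)
    (ρ := fun x => (S.filter fun o => r x < r o).card) (V := range n)
    (by
      intro x hx y hy hxy
      rcases lt_trichotomy (r x) (r y) with h | h | h
      · exact absurd hxy (hmono x y hy h).ne'
      · exact hr h
      · exact absurd hxy (hmono y x hx h).ne)
    (fun x hx => Finset.card_lt_card (Finset.filter_ssubset.2 ⟨x, hx, lt_irrefl _⟩))
    (Finset.range_subset_range.2 hn)
  simpa [topWithin] using hcard

theorem card_topSet {q : O → ℕ} (hq : IsVote q) {j : ℕ} (hj : j ≤ Fintype.card O) :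
    (topSet q j).card = j := by
  have hcard := card_filter_mem_of_injOn (S := univ) (ρ := q)
    (V := Finset.Ico (Fintype.card O - j) (Fintype.card O)) hq.1.injOn
    (fun x _ => by simpa using hq.2 x)
    (fun n hn => by simpa using (Finset.mem_Ico.1 hn).2)
  simp only [Finset.mem_Ico, hq.2, and_true, Nat.card_Ico] at hcard
  rw [topSet, hcard]
  omega

/-- If the members of `G \ H` have values no larger than those of `H \ G`, then any subset of
`H` can be exchanged for a subset of `G` of the same size and no larger total value. -/
theorem exists_subset_sum_le {H G U : Finset O} {g : O → ℤ} (hcard : H.card = G.card)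
    (hg : ∀ x ∈ G \ H, ∀ y ∈ H \ G, g x ≤ g y) (hU : U ⊆ H) :
    ∃ U' ⊆ G, U'.card = U.card ∧ ∑ c ∈ U', g c ≤ ∑ c ∈ U, g c := by
  have hsd : (U \ G).card ≤ (G \ H).card := by
    have h₁ := Finset.card_sdiff_add_card_inter H G
    have h₂ := Finset.card_sdiff_add_card_inter G H
    rw [Finset.inter_comm] at h₂
    have h₃ := Finset.card_le_card (Finset.sdiff_subset_sdiff hU (Finset.Subset.refl G))
    omega
  obtain ⟨E, hE, hEcard⟩ := Finset.exists_subset_card_eq hsd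
  have hcard' : (U ∩ G ∪ E).card = U.card := by
    rw [Finset.card_union_of_disjoint, hEcard, add_comm, Finset.card_sdiff_add_card_inter]
    refine Finset.disjoint_left.2 fun x hx hxE => ?_
    exact (Finset.mem_sdiff.1 (hE hxE)).2 (hU (Finset.mem_inter.1 hx).1)
  refine ⟨U ∩ G ∪ E, ?_, hcard', sum_le_sum_of_card_eq hcard' ?_⟩
  · exact Finset.union_subset Finset.inter_subset_right (hE.trans Finset.sdiff_subset)
  · intro x hx y hy
    simp only [Finset.mem_sdiff, Finset.mem_union, Finset.mem_inter] at hx hy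
    refine hg x (hE (by tauto)) y (Finset.mem_sdiff.2 ⟨hU hy.1, by tauto⟩)

/-- The averages achieved by the algorithm for `U` and `D` bound those achieved by any other
coalition of the same size which lifts a set `G`, with initial scores below those of `H`, to the
top. -/
theorem avg_Dset_le_avg_Uset {tb : O → ℕ} (htb : Function.Injective tb) {P : List (O → ℕ)}
    {H G : Finset O} (hcard : H.card = G.card) (hH : H.Nonempty) (hHc : (univ \ H).Nonempty)
    (hHG : ∀ x ∈ G \ H, ∀ y ∈ H \ G, score bordaVec P x ≤ score bordaVec P y)
    {k : ℕ} (hk : 1 ≤ k) {Q : List (O → ℕ)} (hlen : Q.length = k - 1) (hQ : ∀ q ∈ Q, IsVote q)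
    (hG : ∀ x ∈ G, ∀ y ∉ G, score bordaVec (P ++ Q) y ≤ score bordaVec (P ++ Q) x) :
    (∑ d ∈ Dset bordaVec tb P (swf bordaVec tb P) H k,
        (score bordaVec (P ++ stageProfile bordaVec tb P H (k - 1)) d : ℚ)) /
        ((Dset bordaVec tb P (swf bordaVec tb P) H k).card : ℚ) ≤
      (∑ u ∈ Uset bordaVec tb P (swf bordaVec tb P) H k,
        (score bordaVec (P ++ stageProfile bordaVec tb P H (k - 1)) u : ℚ)) /
        ((Uset bordaVec tb P (swf bordaVec tb P) H k).card : ℚ) := by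
  obtain ⟨u₀, hu₀, -⟩ := exists_mem_Uset (tb := tb) (P := P) hH k
  obtain ⟨d₀, hd₀, -⟩ := exists_mem_Dset (tb := tb) (P := P) hHc k
  set U := Uset bordaVec tb P (swf bordaVec tb P) H k with hUdef
  set D := Dset bordaVec tb P (swf bordaVec tb P) H k with hDdef
  obtain ⟨U', hU'G, hU'card, hU'sum⟩ :=
    exists_subset_sum_le hcard hHG (Uset_subset (swf bordaVec tb P) k : U ⊆ H)
  obtain ⟨D', hD'G, hD'card, hD'sum⟩ :=
    exists_subset_sum_le (H := univ \ H) (G := univ \ G) (g := fun c => -score bordaVec P c)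
      (by rw [Finset.card_univ_sdiff, Finset.card_univ_sdiff, hcard])
      (by
        intro x hx y hy
        simp only [Finset.mem_sdiff, Finset.mem_univ, true_and, not_not] at hx hy
        exact neg_le_neg (hHG y (by simp [hy]) x (by simp [hx])))
      (Dset_subset (swf bordaVec tb P) k : D ⊆ univ \ H)
  rw [Finset.sum_neg_distrib, Finset.sum_neg_distrib, neg_le_neg_iff] at hD'sum
  have hUscore := sum_score_le_sum_stageProfile (P := P) (H := H) htb hU'card
    (fun l h₁ h₂ u hu x hx => stageVote_lt_of_mem_Uset htb h₁ (by omega) hu hx) hlen hQ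
  have hDscore := sum_stageProfile_le_sum_score (P := P) (H := H) htb hD'card
    (fun l h₁ h₂ d hd x hx => stageVote_lt_of_mem_Dset htb h₁ (by omega) hd hx) hlen hQ
  have hUle : ∑ c ∈ U', score bordaVec (P ++ Q) c ≤
      ∑ c ∈ U, score bordaVec (P ++ stageProfile bordaVec tb P H (k - 1)) c := by
    simp only [score_append, Finset.sum_add_distrib]
    linarith
  have hDle : ∑ c ∈ D, score bordaVec (P ++ stageProfile bordaVec tb P H (k - 1)) c ≤
      ∑ c ∈ D', score bordaVec (P ++ Q) c := by
    simp only [score_append, Finset.sum_add_distrib]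
    linarith
  have hUpos : 0 < U.card := Finset.card_pos.2 ⟨u₀, hu₀⟩
  have hDpos : 0 < D.card := Finset.card_pos.2 ⟨d₀, hd₀⟩
  obtain ⟨τ, hτ, hτmin⟩ := Finset.exists_min_image U' (score bordaVec (P ++ Q))
    (Finset.card_pos.1 (hU'card ▸ hUpos))
  have hUτ := Finset.card_nsmul_le_sum U' _ _ hτmin
  have hDτ := Finset.sum_le_card_nsmul D' (score bordaVec (P ++ Q))
    (score bordaVec (P ++ Q) τ) fun d hd =>
      hG τ (hU'G hτ) d (Finset.mem_sdiff.1 (hD'G hd)).2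
  rw [hU'card, nsmul_eq_mul] at hUτ
  rw [hD'card, nsmul_eq_mul] at hDτ
  refine le_trans (b := (score bordaVec (P ++ Q) τ : ℚ)) ?_ ?_
  · rw [div_le_iff₀ (by exact_mod_cast hDpos), mul_comm]
    exact_mod_cast hDle.trans hDτ
  · rw [le_div_iff₀ (by exact_mod_cast hUpos), mul_comm]
    exact_mod_cast hUτ.trans hUle

theorem score_bordaVec_nonneg {O : Type*} (P : List (O → ℕ)) (c : O) :
    0 ≤ score bordaVec P c := by
  refine List.sum_nonneg fun n hn => ?_
  obtain ⟨q, -, rfl⟩ := List.mem_map.1 hn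
  exact Int.natCast_nonneg _

/-- A Rational Compromise with a single outcome is reached within the first `⌈m/2⌉` rounds. -/
theorem rcIndex_bounds {q po : O → ℕ} (hq : IsVote q) (hpo : IsVote po) {p : O}
    (h : RC q po = {p}) : 1 ≤ rcIndex q po ∧ 2 * rcIndex q po ≤ Fintype.card O + 1 := by
  have hm : 1 ≤ Fintype.card O := Fintype.card_pos_iff.2 ⟨p⟩
  have hmem : Fintype.card O ∈ {j | 1 ≤ j ∧ (topSet q j ∩ topSet po j).Nonempty} :=
    ⟨hm, p, by simp [topSet]⟩
  have hle : rcIndex q po ≤ Fintype.card O := Nat.sInf_le hmem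
  refine ⟨(Nat.sInf_mem ⟨_, hmem⟩).1, ?_⟩
  have hunion := Finset.card_union_add_card_inter (topSet q (rcIndex q po))
    (topSet po (rcIndex q po))
  rw [card_topSet hq hle, card_topSet hpo hle] at hunion
  have hinter : (topSet q (rcIndex q po) ∩ topSet po (rcIndex q po)).card = 1 := by
    rw [← RC, h, Finset.card_singleton]
  have huniv := Finset.card_le_univ (topSet q (rcIndex q po) ∪ topSet po (rcIndex q po))
  omega

/-- Lemma 9: run Algorithm 2 with the Borda rule and `k` manipulators, and
let `q(U^i)`, `q(D^i)` be the average scores of the members of `U^i`, `D^i` after `k − 1`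
stages.  If `q(U^i) < q(D^i)` at every iteration `i ∈ {1, …, ⌈m/2⌉}`, then no profile of
`k − 1` manipulative Borda votes makes `p` the unique Rational Compromise outcome. -/
theorem lemma9_borda_failure_condition
    (k : ℕ) (hk : 1 ≤ k) (tb : O → ℕ) (P : List (O → ℕ)) (po : O → ℕ) (p : O)
    (htb : Function.Injective tb) (hP : ∀ q ∈ P, IsVote q) (hpo : IsVote po)
    (havg : ∀ i, 1 ≤ i → i ≤ (Fintype.card O + 1) / 2 →
      (∑ u ∈ UsetAlg bordaVec tb P po p i k,
            (stageScoreAlg bordaVec tb P po p i (k - 1) u : ℚ)) /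
          ((UsetAlg bordaVec tb P po p i k).card : ℚ) <
        (∑ d ∈ DsetAlg bordaVec tb P po p i k,
            (stageScoreAlg bordaVec tb P po p i (k - 1) d : ℚ)) /
          ((DsetAlg bordaVec tb P po p i k).card : ℚ)) :
    ¬ ∃ PM : List (O → ℕ), PM.length = k - 1 ∧ (∀ q ∈ PM, IsVote q) ∧
        RC (swf bordaVec tb (P ++ PM)) po = {p} := by
  rintro ⟨PM, hlen, hPM, hRC⟩
  have hvote : IsVote (swf bordaVec tb (P ++ PM)) := isVote_swf htb _
  obtain ⟨hi₁, hi₂⟩ := rcIndex_bounds hvote hpo hRC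
  unfold RC at hRC
  set i := rcIndex (swf bordaVec tb (P ++ PM)) po
  have hineq := havg i hi₁ (by omega)
  unfold UsetAlg DsetAlg stageScoreAlg at hineq
  have hp : p ∈ topSet (swf bordaVec tb (P ++ PM)) i ∩ topSet po i := by simp [hRC]
  obtain ⟨hpG, hpo'⟩ := Finset.mem_inter.1 hp
  have hGcard : (topSet (swf bordaVec tb (P ++ PM)) i).card = i := card_topSet hvote (by omega)
  have hScard : ((univ \ topSet po i).erase p).card = Fintype.card O - i := by
    rw [Finset.erase_eq_of_notMem (by simp [hpo']), Finset.card_univ_sdiff,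
      card_topSet hpo (by omega)]
  have hHcard : (Hset (swf bordaVec tb P) po p i).card = i := by
    rw [Hset, Finset.card_insert_of_notMem (by simp [topWithin]),
      card_topWithin (swf_injective htb P) _ (by omega)]
    omega
  have hHne : (Hset (swf bordaVec tb P) po p i).Nonempty := ⟨p, Finset.mem_insert_self _ _⟩
  rcases (univ \ Hset (swf bordaVec tb P) po p i).eq_empty_or_nonempty with hHc | hHc
  · have hD := Dset_subset (tb := tb) (P := P) (H := Hset (swf bordaVec tb P) po p i)
      (swf bordaVec tb P) k
    rw [hHc, Finset.subset_empty] at hD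
    rw [hD, Finset.sum_empty, zero_div] at hineq
    refine absurd hineq (not_lt.2 (div_nonneg (Finset.sum_nonneg fun u _ => ?_)
      (Nat.cast_nonneg _)))
    exact_mod_cast score_bordaVec_nonneg _ u
  refine absurd hineq (not_lt.2 (avg_Dset_le_avg_Uset htb (hHcard.trans hGcard.symm) hHne hHc
    ?_ hk hlen hPM ?_))
  · intro x hx y hy
    obtain ⟨hxG, hxH⟩ := Finset.mem_sdiff.1 hx
    obtain ⟨hyH, hyG⟩ := Finset.mem_sdiff.1 hy
    rw [Hset, Finset.mem_insert, not_or] at hxH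
    have hxS : x ∈ (univ \ topSet po i).erase p := by
      simp only [Finset.mem_erase, Finset.mem_sdiff, Finset.mem_univ, true_and]
      refine ⟨hxH.1, fun hxo => hxH.1 ?_⟩
      have : x ∈ ({p} : Finset O) := hRC ▸ Finset.mem_inter.2 ⟨hxG, hxo⟩
      simpa using this
    have hyT := (Finset.mem_insert.1 hyH).resolve_left fun h => hyG (h ▸ hpG)
    have hyc := (Finset.mem_filter.1 hyT).2
    have hxc := fun h => hxH.2 (Finset.mem_filter.2 ⟨hxS, h⟩)
    refine score_le_of_swf_lt (tb := tb) (not_le.1 fun hle => hxc (lt_of_le_of_lt ?_ hyc))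
    refine Finset.card_le_card fun z hz => ?_
    obtain ⟨hzS, hz⟩ := Finset.mem_filter.1 hz
    exact Finset.mem_filter.2 ⟨hzS, hle.trans_lt hz⟩
  · intro x hx y hy
    refine score_le_of_swf_lt (tb := tb) ?_
    simp only [topSet, Finset.mem_filter, Finset.mem_univ, true_and] at hx hy
    omega
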